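/- arXiv:2605.07119 — 2 statements merged into one kernel-verified Lean document; each statement's English description precedes it below -/
import Mathlib

section
/- Fix d, K ∈ ℕ₊, 0 < s < 1, and let r : B → (ℝ^d)^K (on the closed Euclidean unit ball B of ℝ^d, with components r_1,…,r_K) satisfy: ‖r_k(x)‖₂ ≤ λ_max for all x ∈ B and k; ‖r_k(x) − r_{k̃}(x)‖₂ ≥ s_sep for all x ∈ B and k ≠ k̃; and the Lipschitz bound max_k ‖r_k(x) − r_k(x̃)‖₂ ≤ L_r‖x − x̃‖₂ for all x, x̃ ∈ B. Fix x_0 ∈ B and define centres recursively by x_∅ := x_0 and x_{αk} := x_α + s^{|α|+1}·r_k(x_α) for every word α over {1,…,K} and every k ∈ {1,…,K}, assuming all centres remain in B. Let δ_l denote the minimum Euclidean distance between distinct points of X_l := {x_α : |α| = l}. Then δ_1 ≥ s·s_sep, and for every l ≥ 1: δ_{l+1} ≥ max{0, min{s^{l+1}·s_sep, (1 − s^{l+1}·L_r)·δ_l − 2·s^{l+1}·λ_max}}. -/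
/-- Recursively generated centres of a classification field.  Words over `{1,…,K}` are
encoded as `List (Fin K)`, written with the most recently appended letter first, so that
the root is `[]` and the child of `x_α` in direction `k` is
`x_{αk} = x_α + s^(|α|+1) • r (x_α) k`. -/
noncomputable def centre {d K : ℕ} (s : ℝ)
    (r : EuclideanSpace ℝ (Fin d) → Fin K → EuclideanSpace ℝ (Fin d))
    (x₀ : EuclideanSpace ℝ (Fin d)) : List (Fin K) → EuclideanSpace ℝ (Fin d)
  | [] => x₀
  | k :: α => centre s r x₀ α + s ^ (α.length + 1) • r (centre s r x₀ α) k

/-!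
Distinct children of a common parent carry distinct letters, so the sibling separation of `r`,
scaled by the step, separates them. Children of distinct parents start at distance at least `δ_l`,
and each moves by at most `s ^ (l + 1) * λ_max`, so they remain `δ_l - 2 * s ^ (l + 1) * λ_max`
apart. Since `s ^ (l + 1) * L_r * δ_l` is nonnegative, this is at least the bound of the theorem.
-/

section Displacement

variable {𝕜 E ι : Type*} [NormedDivisionRing 𝕜] [SeminormedAddCommGroup E] [Module 𝕜 E]
  [NormSMulClass 𝕜 E]

theorem norm_sub_sub_two_mul_le_norm_add_sub_add {x y u v : E} {c : ℝ}
    (hu : ‖u‖ ≤ c) (hv : ‖v‖ ≤ c) : ‖x - y‖ - 2 * c ≤ ‖(x + u) - (y + v)‖ :=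
  calc
    ‖x - y‖ - 2 * c = ‖x - y‖ - (c + c) := by rw [two_mul]
    _ ≤ ‖x - y‖ - ‖u - v‖ := sub_le_sub_left (norm_sub_le_of_le hu hv) _
    _ ≤ ‖(x - y) + (u - v)‖ := norm_sub_le_norm_add _ _
    _ = ‖(x + u) - (y + v)‖ := by rw [add_sub_add_comm]

theorem mul_le_norm_add_smul_sub_add_smul_of_ne {t : 𝕜} {x : E} {v : ι → E} {sep : ℝ}
    (hv : Pairwise fun k k' ↦ sep ≤ ‖v k - v k'‖) {k j : ι}
    (hne : x + t • v k ≠ x + t • v j) :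
    ‖t‖ * sep ≤ ‖(x + t • v k) - (x + t • v j)‖ := by
  have hkj : k ≠ j := by
    rintro rfl
    exact hne rfl
  rw [add_sub_add_left_eq_sub, ← smul_sub, norm_smul]
  exact mul_le_mul_of_nonneg_left (hv hkj) (norm_nonneg t)

theorem min_le_norm_add_smul_sub_add_smul_of_ne {t : 𝕜} {r : E → ι → E} {x y : E} {lam sep δ : ℝ}
    (hx : ∀ k, ‖r x k‖ ≤ lam) (hy : ∀ k, ‖r y k‖ ≤ lam)
    (hsib : Pairwise fun k k' ↦ sep ≤ ‖r x k - r x k'‖) (hδ : x ≠ y → δ ≤ ‖x - y‖)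
    {k j : ι} (hne : x + t • r x k ≠ y + t • r y j) :
    min (‖t‖ * sep) (δ - 2 * (‖t‖ * lam)) ≤ ‖(x + t • r x k) - (y + t • r y j)‖ := by
  have norm_smul_le_step {v : E} (hv : ‖v‖ ≤ lam) : ‖t • v‖ ≤ ‖t‖ * lam :=
    (norm_smul t v).trans_le (mul_le_mul_of_nonneg_left hv (norm_nonneg t))
  obtain rfl | hxy := eq_or_ne x y
  · exact (min_le_left _ _).trans (mul_le_norm_add_smul_sub_add_smul_of_ne hsib hne)
  · calc
      min (‖t‖ * sep) (δ - 2 * (‖t‖ * lam)) ≤ δ - 2 * (‖t‖ * lam) := min_le_right _ _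
      _ ≤ ‖x - y‖ - 2 * (‖t‖ * lam) := sub_le_sub_right (hδ hxy) _
      _ ≤ ‖(x + t • r x k) - (y + t • r y j)‖ :=
        norm_sub_sub_two_mul_le_norm_add_sub_add
          (norm_smul_le_step (hx k)) (norm_smul_le_step (hy j))

theorem recursive_lower_bound_levelwise_centre_separation_general
    {s : 𝕜} {lamMax sSep : ℝ} {r : E → ι → E} {c : List ι → E}
    (hc : ∀ k α, c (k :: α) = c α + s ^ (α.length + 1) • r (c α) k)
    (hbd : ∀ α k, ‖r (c α) k‖ ≤ lamMax)
    (hsib : ∀ α, Pairwise fun k k' ↦ sSep ≤ ‖r (c α) k - r (c α) k'‖) :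
    (∀ α β : List ι, α.length = 1 → β.length = 1 → c α ≠ c β → ‖s‖ * sSep ≤ ‖c α - c β‖) ∧
    (∀ (l : ℕ) (δl : ℝ),
      (∀ α β : List ι, α.length = l → β.length = l → c α ≠ c β → δl ≤ ‖c α - c β‖) →
      ∀ α β : List ι, α.length = l + 1 → β.length = l + 1 → c α ≠ c β →
        min (‖s‖ ^ (l + 1) * sSep) (δl - 2 * ‖s‖ ^ (l + 1) * lamMax) ≤ ‖c α - c β‖) := by
  constructor
  · intro α β hα hβ hne
    obtain ⟨k, rfl⟩ := List.length_eq_one_iff.mp hα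
    obtain ⟨j, rfl⟩ := List.length_eq_one_iff.mp hβ
    simp only [hc, List.length_nil, zero_add, pow_one] at hne ⊢
    exact mul_le_norm_add_smul_sub_add_smul_of_ne (hsib []) hne
  · intro l δl hδl α β hα hβ hne
    obtain ⟨k, α, rfl⟩ := List.exists_cons_of_length_eq_add_one hα
    obtain ⟨j, β, rfl⟩ := List.exists_cons_of_length_eq_add_one hβ
    have hαl : α.length = l := Nat.succ.inj hα
    have hβl : β.length = l := Nat.succ.inj hβ
    rw [hc, hc, hαl, hβl] at hne ⊢
    rw [← norm_pow, mul_assoc]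
    exact min_le_norm_add_smul_sub_add_smul_of_ne (hbd α) (hbd β) (hsib α) (hδl α β hαl hβl) hne

end Displacement

/-- Recursive lower bound for level-wise centre separation.
If `r` is bounded by `λ_max`, has sibling separation `s_sep`, and is `L_r`-Lipschitz on
the closed unit ball, and centres are generated recursively from `x₀`, then
`δ_1 ≥ s·s_sep`, and for every `l ≥ 1`,
`δ_{l+1} ≥ max {0, min {s^{l+1} s_sep, (1 − s^{l+1} L_r) δ_l − 2 s^{l+1} λ_max}}`,
where `δ_l` is (a nonnegative lower bound on) the minimum distance between distinct
level-`l` centres. -/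
theorem recursive_lower_bound_levelwise_centre_separation
    (d K : ℕ) (hd : 0 < d) (hK : 0 < K)
    (s lamMax sSep Lr : ℝ)
    (hs0 : 0 < s) (hs1 : s < 1) (hlam : 0 < lamMax) (hsep : 0 < sSep) (hLr : 0 ≤ Lr)
    (r : EuclideanSpace ℝ (Fin d) → Fin K → EuclideanSpace ℝ (Fin d))
    (hbd : ∀ x ∈ Metric.closedBall (0 : EuclideanSpace ℝ (Fin d)) 1, ∀ k, ‖r x k‖ ≤ lamMax)
    (hsib : ∀ x ∈ Metric.closedBall (0 : EuclideanSpace ℝ (Fin d)) 1,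
      ∀ k k' : Fin K, k ≠ k' → sSep ≤ ‖r x k - r x k'‖)
    (hlip : ∀ x ∈ Metric.closedBall (0 : EuclideanSpace ℝ (Fin d)) 1,
      ∀ y ∈ Metric.closedBall (0 : EuclideanSpace ℝ (Fin d)) 1,
        ∀ k, ‖r x k - r y k‖ ≤ Lr * ‖x - y‖)
    (x₀ : EuclideanSpace ℝ (Fin d)) (hx₀ : x₀ ∈ Metric.closedBall (0 : EuclideanSpace ℝ (Fin d)) 1)
    (hball : ∀ α : List (Fin K),
      centre s r x₀ α ∈ Metric.closedBall (0 : EuclideanSpace ℝ (Fin d)) 1) :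
    (∀ α β : List (Fin K), α.length = 1 → β.length = 1 →
        centre s r x₀ α ≠ centre s r x₀ β →
        s * sSep ≤ ‖centre s r x₀ α - centre s r x₀ β‖) ∧
    (∀ l : ℕ, 1 ≤ l → ∀ δl : ℝ, 0 ≤ δl →
      (∀ α β : List (Fin K), α.length = l → β.length = l →
        centre s r x₀ α ≠ centre s r x₀ β →
        δl ≤ ‖centre s r x₀ α - centre s r x₀ β‖) →
      ∀ α β : List (Fin K), α.length = l + 1 → β.length = l + 1 →
        centre s r x₀ α ≠ centre s r x₀ β →
        max 0 (min (s ^ (l + 1) * sSep)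
            ((1 - s ^ (l + 1) * Lr) * δl - 2 * s ^ (l + 1) * lamMax))
          ≤ ‖centre s r x₀ α - centre s r x₀ β‖) := by
  have hsharp := recursive_lower_bound_levelwise_centre_separation_general (c := centre s r x₀)
    (fun _ _ ↦ rfl) (fun α ↦ hbd _ (hball α)) (fun α ↦ hsib _ (hball α))
  rw [Real.norm_of_nonneg hs0.le] at hsharp
  refine ⟨hsharp.1, fun l _ δl hδl hsepl α β hα hβ hne ↦ max_le (norm_nonneg _) ?_⟩
  refine (min_le_min_left _ (sub_le_sub_right ?_ _)).trans (hsharp.2 l δl hsepl α β hα hβ hne)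
  exact mul_le_of_le_one_left hδl (sub_le_self 1 (by positivity))
end

section
/- Fix d, K ∈ ℕ₊, 0 < s < 1, constants λ_max > 0 (residual bound), s_sep > 0 (sibling separation), and L_r ≥ 0 (Lipschitz constant). Let r : B → (ℝ^d)^K on the closed Euclidean unit ball B satisfy ‖r_k(x)‖₂ ≤ λ_max, ‖r_k(x) − r_{k̃}(x)‖₂ ≥ s_sep for k ≠ k̃, and max_k ‖r_k(x) − r_k(x̃)‖₂ ≤ L_r‖x−x̃‖₂ for all x, x̃ ∈ B. Fix x_0 ∈ B and define centres recursively by x_∅ = x_0 and x_{αk} = x_α + s^{|α|+1} r_k(x_α), with all centres remaining in B, and let δ_l be the minimum pairwise Euclidean distance among distinct level-l centres. Assume 1 − s − s²·L_r > 0 and 2·λ_max·s/(1 − s − s²·L_r) ≤ s_sep, and set c_sep := 2·λ_max·s/(1 − s − s²·L_r). Then for every l ∈ ℕ₊, δ_l ≥ c_sep·s^l. -/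
/-!
Two distinct centres at level `l + 1` either share their parent centre, and are then at distance at
least `s ^ (l + 1) * s_sep` by sibling separation, or have distinct parent centres, which come
closer by at most `2 * s ^ (l + 1) * λ_max`. The bound `s_sep * s ^ l` survives the second case
as soon as `2 * λ_max * s ≤ (1 - s) * s_sep`, which is what `c_sep ≤ s_sep` gives after clearing
the denominator and discarding `s ^ 2 * L_r ≥ 0`.
-/

section Separation

variable {𝕜 E ι : Type*} [NormedField 𝕜] [SeminormedAddCommGroup E] [NormedSpace 𝕜 E]

lemma norm_add_smul_sub_add_smul_self (a : 𝕜) (x u v : E) :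
    ‖(x + a • u) - (x + a • v)‖ = ‖a‖ * ‖u - v‖ := by
  rw [add_sub_add_left_eq_sub, ← smul_sub, norm_smul]

lemma norm_sub_sub_two_mul_le_norm_add_smul_sub_add_smul {b : ℝ} (a : 𝕜) (x y : E) {u v : E}
    (hu : ‖u‖ ≤ b) (hv : ‖v‖ ≤ b) :
    ‖x - y‖ - 2 * ‖a‖ * b ≤ ‖(x + a • u) - (y + a • v)‖ := by
  have displacement : ‖a • (v - u)‖ ≤ 2 * ‖a‖ * b :=
    calc ‖a • (v - u)‖ = ‖a‖ * ‖v - u‖ := norm_smul _ _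
      _ ≤ ‖a‖ * (b + b) := by gcongr; exact norm_sub_le_of_le hv hu
      _ = 2 * ‖a‖ * b := by ring
  calc ‖x - y‖ - 2 * ‖a‖ * b ≤ ‖x - y‖ - ‖a • (v - u)‖ := by gcongr
    _ ≤ ‖(x - y) - a • (v - u)‖ := norm_sub_norm_le _ _
    _ = ‖(x + a • u) - (y + a • v)‖ := by congr 1; module

lemma min_le_norm_add_smul_sub_add_smul {r : E → ι → E} {a : 𝕜} {x y : E} {k k' : ι}
    {b sep δ : ℝ} (hx : ‖r x k‖ ≤ b) (hy : ‖r y k'‖ ≤ b)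
    (hsib : k ≠ k' → sep ≤ ‖r x k - r x k'‖) (hδ : x ≠ y → δ ≤ ‖x - y‖)
    (hne : x + a • r x k ≠ y + a • r y k') :
    min (‖a‖ * sep) (δ - 2 * ‖a‖ * b) ≤ ‖(x + a • r x k) - (y + a • r y k')‖ := by
  obtain rfl | hxy := eq_or_ne x y
  · have hk : k ≠ k' := by rintro rfl; exact hne rfl
    rw [norm_add_smul_sub_add_smul_self]
    exact min_le_of_left_le (by gcongr; exact hsib hk)
  · calc min (‖a‖ * sep) (δ - 2 * ‖a‖ * b) ≤ δ - 2 * ‖a‖ * b := min_le_right _ _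
      _ ≤ ‖x - y‖ - 2 * ‖a‖ * b := by gcongr; exact hδ hxy
      _ ≤ _ := norm_sub_sub_two_mul_le_norm_add_smul_sub_add_smul a x y hx hy

lemma mul_pow_succ_le_mul_pow_sub {s b sep : ℝ} (hs : 0 ≤ s) (h : 2 * b * s ≤ (1 - s) * sep)
    (n : ℕ) : sep * s ^ (n + 1) ≤ sep * s ^ n - 2 * s ^ (n + 1) * b :=
  calc sep * s ^ (n + 1) = sep * s ^ n - s ^ n * ((1 - s) * sep) := by ring
    _ ≤ sep * s ^ n - s ^ n * (2 * b * s) := by gcongr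
    _ = sep * s ^ n - 2 * s ^ (n + 1) * b := by ring

theorem intra_level_separation_geometric_lower_bound_general {s : 𝕜} {b sep : ℝ}
    {r : E → ι → E} {x : List ι → E}
    (hx : ∀ α k, x (k :: α) = x α + s ^ (α.length + 1) • r (x α) k)
    (hbd : ∀ α k, ‖r (x α) k‖ ≤ b)
    (hsib : ∀ α k k', k ≠ k' → sep ≤ ‖r (x α) k - r (x α) k'‖)
    (hsep : 2 * b * ‖s‖ ≤ (1 - ‖s‖) * sep)
    {α β : List ι} (hlen : α.length = β.length) (hne : x α ≠ x β) :
    sep * ‖s‖ ^ α.length ≤ ‖x α - x β‖ := by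
  induction α generalizing β with
  | nil => exact absurd (congrArg x (List.length_eq_zero_iff.mp hlen.symm).symm) hne
  | cons k α ih =>
    obtain _ | ⟨k', β⟩ := β
    · cases hlen
    have hlen' : α.length = β.length := Nat.succ.inj hlen
    rw [hx, hx, ← hlen'] at hne ⊢
    refine le_trans (le_min ?_ ?_) <| min_le_norm_add_smul_sub_add_smul
      (hbd α k) (hbd β k') (hsib α k k') (ih hlen') hne
    · rw [norm_pow, List.length_cons, mul_comm]
    · rw [norm_pow]
      exact mul_pow_succ_le_mul_pow_sub (norm_nonneg s) hsep α.length

end Separation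

lemma two_mul_mul_le_one_sub_mul_of_div_le {s b sep L : ℝ} (hsep : 0 ≤ sep) (hL : 0 ≤ L)
    (hpos : 0 < 1 - s - s ^ 2 * L) (h : 2 * b * s / (1 - s - s ^ 2 * L) ≤ sep) :
    2 * b * s ≤ (1 - s) * sep :=
  calc 2 * b * s ≤ sep * (1 - s - s ^ 2 * L) := (div_le_iff₀ hpos).mp h
    _ ≤ sep * (1 - s) := mul_le_mul_of_nonneg_left (sub_le_self _ (by positivity)) hsep
    _ = (1 - s) * sep := mul_comm _ _

/-- **Statement 18.** Geometric lower bound on intra-level separation: if `r` is bounded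
by `λ_max`, has sibling separation `s_sep`, and is `L_r`-Lipschitz on the closed unit
ball, and if `1 − s − s² L_r > 0` and `c_sep := 2 λ_max s/(1 − s − s² L_r) ≤ s_sep`,
then every level `l ≥ 1` satisfies `δ_l ≥ c_sep s^l`, i.e. any two distinct level-`l`
centres are at distance at least `c_sep s^l`. -/
theorem intra_level_separation_geometric_lower_bound
    (d K : ℕ) (hd : 0 < d) (hK : 0 < K)
    (s lamMax sSep Lr : ℝ)
    (hs0 : 0 < s) (hs1 : s < 1) (hlam : 0 < lamMax) (hsep : 0 < sSep) (hLr : 0 ≤ Lr)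
    (r : EuclideanSpace ℝ (Fin d) → Fin K → EuclideanSpace ℝ (Fin d))
    (hbd : ∀ x ∈ Metric.closedBall (0 : EuclideanSpace ℝ (Fin d)) 1, ∀ k, ‖r x k‖ ≤ lamMax)
    (hsib : ∀ x ∈ Metric.closedBall (0 : EuclideanSpace ℝ (Fin d)) 1,
      ∀ k k' : Fin K, k ≠ k' → sSep ≤ ‖r x k - r x k'‖)
    (hlip : ∀ x ∈ Metric.closedBall (0 : EuclideanSpace ℝ (Fin d)) 1,
      ∀ y ∈ Metric.closedBall (0 : EuclideanSpace ℝ (Fin d)) 1,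
        ∀ k, ‖r x k - r y k‖ ≤ Lr * ‖x - y‖)
    (x₀ : EuclideanSpace ℝ (Fin d)) (hx₀ : x₀ ∈ Metric.closedBall (0 : EuclideanSpace ℝ (Fin d)) 1)
    (hball : ∀ α : List (Fin K),
      centre s r x₀ α ∈ Metric.closedBall (0 : EuclideanSpace ℝ (Fin d)) 1)
    (hpos : 0 < 1 - s - s ^ 2 * Lr)
    (hcs : 2 * lamMax * s / (1 - s - s ^ 2 * Lr) ≤ sSep) :
    ∀ l : ℕ, 1 ≤ l →
      ∀ α β : List (Fin K), α.length = l → β.length = l →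
        centre s r x₀ α ≠ centre s r x₀ β →
        2 * lamMax * s / (1 - s - s ^ 2 * Lr) * s ^ l
          ≤ ‖centre s r x₀ α - centre s r x₀ β‖ := by
  rintro l - α β rfl hβ hne
  have hs : ‖s‖ = s := Real.norm_of_nonneg hs0.le
  have hscale : 2 * lamMax * ‖s‖ ≤ (1 - ‖s‖) * sSep := by
    rw [hs]
    exact two_mul_mul_le_one_sub_mul_of_div_le hsep.le hLr hpos hcs
  calc 2 * lamMax * s / (1 - s - s ^ 2 * Lr) * s ^ α.length
      ≤ sSep * ‖s‖ ^ α.length := by rw [hs]; gcongr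
    _ ≤ ‖centre s r x₀ α - centre s r x₀ β‖ :=
      intra_level_separation_geometric_lower_bound_general (fun _ _ => rfl)
        (fun α => hbd _ (hball α)) (fun α => hsib _ (hball α)) hscale hβ.symm hne
end
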